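/- Let Y be a Banach space containing a normalized, symmetric basic sequence (y_n) which is not equivalent to the unit vector basis of ℓ_1. Then there exist an admissible sequence w and a bounded linear operator T from d_*(w) into Y such that T e_n = y_n for every n ∈ ℕ, where (e_n) is the unit vector basis of d_*(w). -/

import Mathlib

open Filter Topology

/-- `rearrSum x n = ∑_{k=1}^n x̃_k`, the sum of the `n` largest values of `(|x_k|)`,
i.e. the `n`-th partial sum of the nonincreasing rearrangement of `(|x_k|)`; it is the
supremum of `∑_{k ∈ A} |x_k|` over finite sets `A ⊆ ℕ` of cardinality `n`. -/
noncomputable def rearrSum (x : ℕ → ℝ) (n : ℕ) : ℝ :=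
  sSup ((fun A : Finset ℕ => ∑ k ∈ A, |x k|) '' {A : Finset ℕ | A.card = n})

/-- A sequence of positive reals is admissible if it is nonincreasing, starts at `1`,
tends to `0` and is not summable. -/
def Admissible (w : ℕ → ℝ) : Prop :=
  (∀ n, 0 < w n) ∧ (∀ n, w (n + 1) ≤ w n) ∧ w 0 = 1 ∧
    Tendsto w atTop (𝓝 0) ∧ ¬ Summable w

/-- The underlying set of sequences of `d_*(w)`: sequences `x ∈ c₀` with
`(∑_{k=1}^n x̃_k) / (∑_{k=1}^n w_k) → 0`. -/
def dStarSet (w : ℕ → ℝ) : Set (ℕ → ℝ) :=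
  {x | Tendsto x atTop (𝓝 0) ∧
    Tendsto (fun n => rearrSum x n / ∑ k ∈ Finset.range n, w k) atTop (𝓝 0)}

/-- The norm of `d_*(w)`: `‖x‖ = sup_n (∑_{k=1}^n x̃_k) / (∑_{k=1}^n w_k)`. -/
noncomputable def dStarNorm (w : ℕ → ℝ) (x : ℕ → ℝ) : ℝ :=
  ⨆ n : ℕ, rearrSum x n / ∑ k ∈ Finset.range n, w k

/-- A normed space `D` is a representation of `d_*(w)` if there is a linear bijection `j`
from `D` onto the set of sequences of `d_*(w)` carrying the norm of `D` to the norm of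
`d_*(w)`; i.e. `D` "is" the space `d_*(w)` endowed with its canonical norm. -/
def IsDStarRep (w : ℕ → ℝ) (D : Type*) [NormedAddCommGroup D] [NormedSpace ℝ D]
    (j : D →ₗ[ℝ] (ℕ → ℝ)) : Prop :=
  Function.Injective j ∧ Set.range j = dStarSet w ∧ ∀ x : D, ‖x‖ = dStarNorm w (j x)

/-- `(y n)` is a basic sequence: it is a Schauder basis of the closed linear span of its
range, i.e. every element of that closed span has a unique representation as a norm
convergent series `∑ aₖ yₖ`. -/
def IsBasicSeq {Y : Type*} [NormedAddCommGroup Y] [NormedSpace ℝ Y] (y : ℕ → Y) : Prop :=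
  ∀ x ∈ closure ((Submodule.span ℝ (Set.range y) : Submodule ℝ Y) : Set Y),
    ∃! a : ℕ → ℝ,
      Filter.Tendsto (fun n => ∑ k ∈ Finset.range n, a k • y k) Filter.atTop (nhds x)

/-- Two sequences are equivalent if a series `∑ aₖ yₖ` converges exactly when the
series `∑ aₖ zₖ` converges. -/
def SeqEquivalent {Y Z : Type*} [NormedAddCommGroup Y] [NormedSpace ℝ Y]
    [NormedAddCommGroup Z] [NormedSpace ℝ Z] (y : ℕ → Y) (z : ℕ → Z) : Prop :=
  ∀ a : ℕ → ℝ,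
    (∃ x : Y, Filter.Tendsto (fun n => ∑ k ∈ Finset.range n, a k • y k)
      Filter.atTop (nhds x)) ↔
    (∃ x : Z, Filter.Tendsto (fun n => ∑ k ∈ Finset.range n, a k • z k)
      Filter.atTop (nhds x))

/-- `(y n)` is a symmetric basic sequence: it is basic and every permutation of it is a
basic sequence equivalent to it. -/
def IsSymmetricBasicSeq {Y : Type*} [NormedAddCommGroup Y] [NormedSpace ℝ Y]
    (y : ℕ → Y) : Prop :=
  IsBasicSeq y ∧ ∀ σ : Equiv.Perm ℕ, IsBasicSeq (y ∘ σ) ∧ SeqEquivalent (y ∘ σ) y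

/-- `(y n)` is equivalent to the unit vector basis of `ℓ₁`: there is `c > 0` with
`‖∑ aₖ yₖ‖ ≥ c ∑ |aₖ|` for all finitely supported scalars. -/
def EquivL1UnitBasis {Y : Type*} [NormedAddCommGroup Y] [NormedSpace ℝ Y]
    (y : ℕ → Y) : Prop :=
  ∃ c : ℝ, 0 < c ∧ ∀ (n : ℕ) (a : ℕ → ℝ),
    c * ∑ k ∈ Finset.range n, |a k| ≤ ‖∑ k ∈ Finset.range n, a k • y k‖

/-- A normalized sequence `(y n)` has upper `p`-estimates if there is `C > 0` with
`‖∑_{k=1}^n aₖ yₖ‖ ≤ C (∑_{k=1}^n |aₖ|^p)^(1/p)` for all `n` and all scalars. -/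
def HasUpperPEstimates {Y : Type*} [NormedAddCommGroup Y] [NormedSpace ℝ Y]
    (p : ℝ) (y : ℕ → Y) : Prop :=
  ∃ C : ℝ, 0 < C ∧ ∀ (n : ℕ) (a : ℕ → ℝ),
    ‖∑ k ∈ Finset.range n, a k • y k‖ ≤
      C * (∑ k ∈ Finset.range n, |a k| ^ p) ^ (1 / p)

open scoped BoundedContinuousFunction

/-- Space of convergent partial-sum sequences. -/
def partialSumSpace {Y : Type*} [NormedAddCommGroup Y] [NormedSpace ℝ Y] (y : ℕ → Y) :
    Submodule ℝ ((ℕ →ᵇ Y) × Y) where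
  carrier := {p | p.1 0 = 0 ∧ (∀ n, p.1 (n + 1) - p.1 n ∈ Submodule.span ℝ {y n}) ∧
    Tendsto (fun n => p.1 n) atTop (𝓝 p.2)}
  add_mem' := by
    rintro p q ⟨h1, h2, h3⟩ ⟨k1, k2, k3⟩
    refine ⟨by simp [h1, k1], fun n => ?_, by simpa using h3.add k3⟩
    have := Submodule.add_mem _ (h2 n) (k2 n)
    convert this using 1
    simp only [Prod.fst_add, BoundedContinuousFunction.coe_add, Pi.add_apply]
    abel
  zero_mem' := ⟨by simp, fun n => by simp, by simp⟩
  smul_mem' := by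
    rintro c p ⟨h1, h2, h3⟩
    refine ⟨by simp [h1], fun n => ?_, by simpa using h3.const_smul c⟩
    have := Submodule.smul_mem _ c (h2 n)
    convert this using 1
    simp [smul_sub]

theorem isClosed_partialSumSpace {Y : Type*} [NormedAddCommGroup Y] [NormedSpace ℝ Y]
    (y : ℕ → Y) : IsClosed (partialSumSpace y : Set ((ℕ →ᵇ Y) × Y)) := by
  have hev : ∀ n : ℕ, Continuous (fun p : (ℕ →ᵇ Y) × Y => p.1 n) := fun n =>
    (BoundedContinuousFunction.evalCLM ℝ n).continuous.comp continuous_fst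
  have hset : (partialSumSpace y : Set ((ℕ →ᵇ Y) × Y)) =
      {p | p.1 0 = 0} ∩ ({p | ∀ n, p.1 (n + 1) - p.1 n ∈ Submodule.span ℝ {y n}} ∩
        {p | Tendsto (fun n => p.1 n) atTop (𝓝 p.2)}) := rfl
  rw [hset]
  refine (isClosed_eq (hev 0) continuous_const).inter (IsClosed.inter ?_ ?_)
  · rw [Set.ofPred_forall]
    refine isClosed_iInter fun n => ?_
    have hc : IsClosed ((Submodule.span ℝ {y n} : Submodule ℝ Y) : Set Y) :=
      Submodule.closed_of_finiteDimensional _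
    exact hc.preimage ((hev (n + 1)).sub (hev n))
  · rw [← isSeqClosed_iff_isClosed]
    intro u p hu hup
    have h1 : Tendsto (fun i => (u i).1) atTop (𝓝 p.1) := (continuous_fst.tendsto p).comp hup
    have h2 : Tendsto (fun i => (u i).2) atTop (𝓝 p.2) := (continuous_snd.tendsto p).comp hup
    have h3 := BoundedContinuousFunction.tendsto_iff_tendstoUniformly.1 h1
    exact (h3.tendstoUniformlyOnFilter.mono_right
      (le_top : (atTop : Filter ℕ) ≤ ⊤)).tendsto_of_eventually_tendsto
      (Eventually.of_forall fun i => hu i) h2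

theorem exists_basis_const {Y : Type*} [NormedAddCommGroup Y] [NormedSpace ℝ Y]
    [CompleteSpace Y] (y : ℕ → Y) (hb : IsBasicSeq y) :
    ∃ M : ℝ, 1 ≤ M ∧ ∀ (m n : ℕ) (a : ℕ → ℝ), m ≤ n →
      ‖∑ k ∈ Finset.range m, a k • y k‖ ≤ M * ‖∑ k ∈ Finset.range n, a k • y k‖ := by
  have hcl := isClosed_partialSumSpace y
  have : CompleteSpace (partialSumSpace y) := hcl.completeSpace_coe
  let L : partialSumSpace y →L[ℝ] Y :=
    (ContinuousLinearMap.snd ℝ (ℕ →ᵇ Y) Y).comp (partialSumSpace y).subtypeL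
  have hcoef : ∀ p ∈ partialSumSpace y, ∃ a : ℕ → ℝ,
      ∀ n, p.1 n = ∑ k ∈ Finset.range n, a k • y k := by
    rintro p ⟨h1, h2, h3⟩
    choose a ha using fun n => Submodule.mem_span_singleton.1 (h2 n)
    refine ⟨a, fun n => ?_⟩
    induction n with
    | zero => simpa using h1
    | succ n ih => rw [Finset.sum_range_succ, ← ih, ha]; abel
  have hspan : ∀ (n : ℕ) (a : ℕ → ℝ), ∑ k ∈ Finset.range n, a k • y k ∈
      Submodule.span ℝ (Set.range y) := fun n a =>
    Submodule.sum_mem _ fun k _ => Submodule.smul_mem _ _ (Submodule.subset_span ⟨k, rfl⟩)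
  have hmk : ∀ (a : ℕ → ℝ) (x : Y),
      Tendsto (fun n => ∑ k ∈ Finset.range n, a k • y k) atTop (𝓝 x) →
      ∃ p : partialSumSpace y, (∀ n, p.1.1 n = ∑ k ∈ Finset.range n, a k • y k) ∧ L p = x := by
    intro a x hx
    obtain ⟨C, hC⟩ := Metric.isBounded_iff_subset_closedBall (0 : Y) |>.1
      (Metric.isBounded_range_of_tendsto _ hx)
    refine ⟨⟨(BoundedContinuousFunction.ofNormedAddCommGroup
      (fun n => ∑ k ∈ Finset.range n, a k • y k) continuous_of_discreteTopology C ?_, x),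
      ?_, ?_, ?_⟩, ?_, rfl⟩
    · intro n
      simpa using hC ⟨n, rfl⟩
    · simp
    · intro n
      simp only [BoundedContinuousFunction.coe_ofNormedAddCommGroup, Finset.sum_range_succ,
        add_sub_cancel_left]
      exact Submodule.mem_span_singleton.2 ⟨a n, rfl⟩
    · simpa using hx
    · intro n; rfl
  have hclos : ∀ (a : ℕ → ℝ) (x : Y),
      Tendsto (fun n => ∑ k ∈ Finset.range n, a k • y k) atTop (𝓝 x) →
      x ∈ closure ((Submodule.span ℝ (Set.range y) : Submodule ℝ Y) : Set Y) := fun a x hx =>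
    mem_closure_of_tendsto hx (Eventually.of_forall fun n => hspan n a)
  have hinj : Function.Injective L := by
    intro p q hpq
    obtain ⟨a, ha⟩ := hcoef p.1 p.2
    obtain ⟨b, hb'⟩ := hcoef q.1 q.2
    have hpt := p.2.2.2
    have hqt := q.2.2.2
    have hpq' : p.1.2 = q.1.2 := hpq
    simp_rw [ha] at hpt
    simp_rw [hb'] at hqt
    rw [← hpq'] at hqt
    have hab := (hb p.1.2 (hclos a _ hpt)).unique hpt hqt
    apply Subtype.ext
    refine Prod.ext ?_ hpq'
    ext n
    rw [ha, hb', hab]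
  have hrange : Set.range L =
      closure ((Submodule.span ℝ (Set.range y) : Submodule ℝ Y) : Set Y) := by
    apply Set.Subset.antisymm
    · rintro _ ⟨p, rfl⟩
      obtain ⟨a, ha⟩ := hcoef p.1 p.2
      have hpt := p.2.2.2
      simp_rw [ha] at hpt
      exact hclos a _ hpt
    · intro x hx
      obtain ⟨a, ha, -⟩ := hb x hx
      obtain ⟨p, -, hp⟩ := hmk a x ha
      exact ⟨p, hp⟩
  obtain ⟨K, hK⟩ := L.antilipschitz_of_injective_of_isClosed_range hinj
    (by rw [hrange]; exact isClosed_closure)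
  refine ⟨max K 1, le_max_right _ _, fun m n a hmn => ?_⟩
  let b : ℕ → ℝ := fun k => if k < n then a k else 0
  have hbs : ∀ i ≤ n, ∑ k ∈ Finset.range i, b k • y k = ∑ k ∈ Finset.range i, a k • y k := by
    intro i hi
    refine Finset.sum_congr rfl fun k hk => ?_
    have : k < n := (Finset.mem_range.1 hk).trans_le hi
    simp [b, this]
  have hconst : ∀ i ≥ n, ∑ k ∈ Finset.range i, b k • y k = ∑ k ∈ Finset.range n, a k • y k := by
    intro i hi
    rw [← hbs n le_rfl]
    refine (Finset.sum_subset (Finset.range_mono hi) fun k _ hk => ?_).symm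
    have : ¬ k < n := by simpa using hk
    simp [b, this]
  obtain ⟨p, hp1, hp2⟩ := hmk b (∑ k ∈ Finset.range n, a k • y k)
    (tendsto_const_nhds.congr' ((eventually_ge_atTop n).mono fun i hi => (hconst i hi).symm))
  have h1 : ‖p‖ ≤ K * ‖L p‖ := by
    simpa using hK.le_mul_dist p 0
  rw [hp2] at h1
  calc ‖∑ k ∈ Finset.range m, a k • y k‖ = ‖p.1.1 m‖ := by rw [hp1, hbs m hmn]
    _ ≤ ‖p.1.1‖ := BoundedContinuousFunction.norm_coe_le_norm _ _
    _ ≤ ‖p.1‖ := norm_fst_le _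
    _ ≤ K * ‖∑ k ∈ Finset.range n, a k • y k‖ := h1
    _ ≤ _ := by gcongr; exact le_max_left _ _


theorem exists_perm_extend (N M : ℕ) (s : Finset ℕ) (g : ℕ → ℕ) (hs : s ⊆ Finset.Ico N M)
    (hg : ∀ k ∈ s, g k ∈ Finset.Ico N M) (hinj : Set.InjOn g s) :
    ∃ π : Equiv.Perm ℕ, (∀ k ∈ s, π k = g k) ∧
      ∀ k, π k ∈ Finset.Ico N M ↔ k ∈ Finset.Ico N M := by
  classical
  obtain ⟨e, he⟩ := Finset.exists_equiv_extend_of_card_eq (α := Finset.Ico N M)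
    (t := Finset.Ico N M) (by simp) (s := Finset.univ.filter fun x => (x : ℕ) ∈ s)
    (f := fun x => g x) (by
      intro k hk
      simp only [Finset.mem_image, Finset.mem_filter, Finset.mem_univ, true_and] at hk
      obtain ⟨x, hx, rfl⟩ := hk
      exact hg _ hx) (by
      intro x hx z hz h
      simp only [Finset.coe_filter, Finset.mem_univ, true_and] at hx hz
      exact Subtype.ext (hinj hx hz h))
  refine ⟨Equiv.Perm.ofSubtype (p := fun k => k ∈ Finset.Ico N M) e, fun k hk => ?_, fun k => ?_⟩
  · rw [Equiv.Perm.ofSubtype_apply_of_mem (p := fun k => k ∈ Finset.Ico N M) e (hs hk)]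
    exact he ⟨k, hs hk⟩ (by simpa using hk)
  · exact Equiv.Perm.ofSubtype_apply_mem_iff_mem (p := fun k => k ∈ Finset.Ico N M) e k

theorem coef_le {Y : Type*} [NormedAddCommGroup Y] [NormedSpace ℝ Y]
    (y : ℕ → Y) (hnorm : ∀ n, ‖y n‖ = 1) (M : ℝ)
    (hM : ∀ (m n : ℕ) (a : ℕ → ℝ), m ≤ n →
      ‖∑ k ∈ Finset.range m, a k • y k‖ ≤ M * ‖∑ k ∈ Finset.range n, a k • y k‖)
    (n : ℕ) (a : ℕ → ℝ) (k : ℕ) (hk : k < n) :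
    |a k| ≤ 2 * M * ‖∑ k ∈ Finset.range n, a k • y k‖ := by
  have h1 := hM (k + 1) n a hk
  have h2 := hM k n a hk.le
  have h3 : a k • y k = ∑ i ∈ Finset.range (k + 1), a i • y i - ∑ i ∈ Finset.range k, a i • y i := by
    rw [Finset.sum_range_succ]; abel
  have h4 : |a k| = ‖a k • y k‖ := by rw [norm_smul, hnorm]; simp
  rw [h4, h3]
  refine (norm_sub_le _ _).trans ?_
  linarith

theorem hump_step {Y : Type*} [NormedAddCommGroup Y] [NormedSpace ℝ Y]
    (y : ℕ → Y) (hnorm : ∀ n, ‖y n‖ = 1) (M : ℝ) (hM1 : 1 ≤ M)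
    (hM : ∀ (m n : ℕ) (a : ℕ → ℝ), m ≤ n →
      ‖∑ k ∈ Finset.range m, a k • y k‖ ≤ M * ‖∑ k ∈ Finset.range n, a k • y k‖)
    (hfail : ∀ C : ℝ, ∃ (n : ℕ) (a : ℕ → ℝ) (g : Equiv.Perm ℕ),
      C * ‖∑ k ∈ Finset.range n, a k • y k‖ < ‖∑ k ∈ Finset.range n, a k • y (g k)‖)
    (N : ℕ) (ε : ℝ) (hε : 0 < ε) :
    ∃ (N' : ℕ) (a : ℕ → ℝ) (π : Equiv.Perm ℕ), N < N' ∧ (∀ k, k ∉ Finset.Ico N N' → a k = 0) ∧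
      (∀ k, π k ∈ Finset.Ico N N' ↔ k ∈ Finset.Ico N N') ∧
      ‖∑ k ∈ Finset.range N', a k • y k‖ ≤ ε ∧
      1 ≤ ‖∑ k ∈ Finset.range N', a k • y (π k)‖ := by
  classical
  set q : ℝ := (2 * N) * (2 * M) with hq
  have hq0 : 0 ≤ q := by positivity
  obtain ⟨n, a, g, h⟩ := hfail (q + (1 + q) / ε)
  set X := ‖∑ k ∈ Finset.range n, a k • y k‖ with hX
  have hX0 : 0 ≤ X := norm_nonneg _
  set S := (Finset.range n).filter fun k => N ≤ k ∧ N ≤ g k with hS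
  set R := (Finset.range n).filter fun k => ¬ (N ≤ k ∧ N ≤ g k) with hR
  have hRc : (R.card : ℝ) ≤ 2 * N := by
    have : R ⊆ Finset.range N ∪ (Finset.range N).image g.symm := by
      intro k hk
      simp only [hR, Finset.mem_filter] at hk
      simp only [Finset.mem_union, Finset.mem_range, Finset.mem_image]
      by_cases h1 : k < N
      · exact Or.inl h1
      · right
        refine ⟨g k, ?_, by simp⟩
        by_contra h2
        exact hk.2 ⟨not_lt.1 h1, not_lt.1 h2⟩
    have h2 : R.card ≤ N + N := (Finset.card_le_card this).trans <|
      (Finset.card_union_le _ _).trans <| by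
        have := Finset.card_image_le (s := Finset.range N) (f := g.symm)
        simp only [Finset.card_range] at this ⊢
        omega
    have : (R.card : ℝ) ≤ ((N + N : ℕ) : ℝ) := by exact_mod_cast h2
    push_cast at this; linarith
  have hRb : ∀ z : ℕ → Y, (∀ k, ‖z k‖ = 1) → ‖∑ k ∈ R, a k • z k‖ ≤ q * X := by
    intro z hz
    calc ‖∑ k ∈ R, a k • z k‖ ≤ ∑ k ∈ R, (2 * M * X) := by
          refine norm_sum_le_of_le _ fun k hk => ?_
          rw [norm_smul, hz, mul_one]
          exact coef_le y hnorm M hM n a k (by simpa using (Finset.mem_filter.1 hk).1)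
      _ = R.card * (2 * M * X) := by simp
      _ ≤ (2 * N) * (2 * M * X) := by gcongr
      _ = q * X := by rw [hq]; ring
  have hsplit : ∀ z : ℕ → Y, ∑ k ∈ S, a k • z k + ∑ k ∈ R, a k • z k
      = ∑ k ∈ Finset.range n, a k • z k := fun z => Finset.sum_filter_add_sum_filter_not _ _ _
  set Z := ‖∑ k ∈ S, a k • y (g k)‖ with hZ
  have h1 : ‖∑ k ∈ Finset.range n, a k • y (g k)‖ ≤ Z + q * X := by
    rw [← hsplit (fun k => y (g k))]
    exact (norm_add_le _ _).trans (add_le_add le_rfl (hRb _ fun k => hnorm _))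
  have h2 : ‖∑ k ∈ S, a k • y k‖ ≤ (1 + q) * X := by
    have : ∑ k ∈ S, a k • y k = ∑ k ∈ Finset.range n, a k • y k - ∑ k ∈ R, a k • y k := by
      rw [← hsplit y]; abel
    rw [this]
    refine (norm_sub_le _ _).trans ?_
    have := hRb y hnorm
    linarith
  have h3 : (1 + q) / ε * X < Z := by nlinarith
  have hZ0 : 0 < Z := lt_of_le_of_lt (by positivity) h3
  have h4 : (1 + q) * X ≤ ε * Z := by
    have : (1 + q) * X = ε * ((1 + q) / ε * X) := by field_simp
    rw [this]; gcongr
  set N' := N + n + 1 + ∑ k ∈ Finset.range n, g k with hN'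
  have hSI : S ⊆ Finset.Ico N N' := by
    intro k hk
    simp only [hS, Finset.mem_filter, Finset.mem_range] at hk
    simp only [Finset.mem_Ico]; omega
  obtain ⟨π, hπ1, hπ2⟩ := exists_perm_extend N N' S g hSI (by
    intro k hk
    simp only [hS, Finset.mem_filter] at hk
    have := Finset.single_le_sum (f := fun k => g k) (fun i _ => Nat.zero_le _) hk.1
    simp only [Finset.mem_Ico]; omega) g.injective.injOn
  have hsum : ∀ z : ℕ → Y, ∑ k ∈ Finset.range N', (if k ∈ S then Z⁻¹ * a k else 0) • z k
      = Z⁻¹ • ∑ k ∈ S, a k • z k := by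
    intro z
    rw [Finset.smul_sum, ← Finset.sum_subset (s₁ := S)]
    · refine Finset.sum_congr rfl fun k hk => ?_
      rw [if_pos hk, mul_smul]
    · intro k hk
      have := hSI hk
      simp only [Finset.mem_Ico] at this
      simpa using this.2
    · intro k _ hk
      simp [hk]
  refine ⟨N', fun k => if k ∈ S then Z⁻¹ * a k else 0, π, by omega, ?_, hπ2, ?_, ?_⟩
  · intro k hk
    exact if_neg fun h => hk (hSI h)
  · rw [hsum, norm_smul, norm_inv, Real.norm_of_nonneg hZ0.le, inv_mul_le_iff₀ hZ0]
    linarith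
  · rw [hsum (fun k => y (π k)), norm_smul, norm_inv, Real.norm_of_nonneg hZ0.le]
    have : ∑ k ∈ S, a k • y (π k) = ∑ k ∈ S, a k • y (g k) :=
      Finset.sum_congr rfl fun k hk => by rw [hπ1 k hk]
    rw [this, ← hZ, inv_mul_cancel₀ hZ0.ne']


theorem exists_block_index (u : ℕ → ℕ) (h0 : u 0 = 0) (hu : StrictMono u) :
    ∃ f : ℕ → ℕ, ∀ k j, f k = j ↔ k ∈ Finset.Ico (u j) (u (j + 1)) := by
  classical
  have hex : ∀ k, ∃ j, k < u (j + 1) := fun k => ⟨k, Nat.lt_of_lt_of_le (Nat.lt_succ_self k)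
    (hu.id_le (k + 1))⟩
  refine ⟨fun k => Nat.find (hex k), fun k j => ?_⟩
  rw [Nat.find_eq_iff, Finset.mem_Ico]
  constructor
  · rintro ⟨h1, h2⟩
    refine ⟨?_, h1⟩
    rcases j with _ | j
    · omega
    · exact not_lt.1 (h2 j (Nat.lt_succ_self j))
  · rintro ⟨h1, h2⟩
    refine ⟨h2, fun i hi => not_lt.2 (le_trans (hu.monotone hi) h1)⟩

theorem exists_sym_const {Y : Type*} [NormedAddCommGroup Y] [NormedSpace ℝ Y] [CompleteSpace Y]
    (y : ℕ → Y) (hnorm : ∀ n, ‖y n‖ = 1) (M : ℝ) (hM1 : 1 ≤ M)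
    (hM : ∀ (m n : ℕ) (a : ℕ → ℝ), m ≤ n →
      ‖∑ k ∈ Finset.range m, a k • y k‖ ≤ M * ‖∑ k ∈ Finset.range n, a k • y k‖)
    (heq : ∀ σ : Equiv.Perm ℕ, SeqEquivalent (y ∘ σ) y) :
    ∃ C : ℝ, ∀ (n : ℕ) (a : ℕ → ℝ) (g : Equiv.Perm ℕ),
      ‖∑ k ∈ Finset.range n, a k • y (g k)‖ ≤ C * ‖∑ k ∈ Finset.range n, a k • y k‖ := by
  classical
  by_contra hcon
  push Not at hcon
  have hstep := fun (N j : ℕ) => hump_step y hnorm M hM1 hM hcon N ((1 / 2 : ℝ) ^ j) (by positivity)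
  choose F A P hF hA hP hA1 hA2 using hstep
  let u : ℕ → ℕ := fun j => Nat.rec 0 (fun j N => F N j) j
  have hu1 : ∀ j, u (j + 1) = F (u j) j := fun j => rfl
  have hu : StrictMono u := strictMono_nat_of_lt_succ fun j => hF _ _
  obtain ⟨f, hf⟩ := exists_block_index u rfl hu
  let a : ℕ → ℕ → ℝ := fun j => A (u j) j
  let p : ℕ → Equiv.Perm ℕ := fun j => P (u j) j
  have ha0 : ∀ j k, f k ≠ j → a j k = 0 := fun j k h =>
    hA (u j) j k fun h' => h ((hf k j).2 h')
  have hpf : ∀ j k, f (p j k) = j ↔ f k = j := fun j k => by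
    rw [hf, hf]; exact hP (u j) j k
  have ha1 : ∀ j, ‖∑ k ∈ Finset.range (u (j + 1)), a j k • y k‖ ≤ (1 / 2 : ℝ) ^ j :=
    fun j => hA1 (u j) j
  have ha2 : ∀ j, 1 ≤ ‖∑ k ∈ Finset.range (u (j + 1)), a j k • y (p j k)‖ := fun j => hA2 (u j) j
  let σ : Equiv.Perm ℕ :=
    { toFun := fun k => p (f k) k
      invFun := fun k => (p (f k)).symm k
      left_inv := by
        intro k
        have : f (p (f k) k) = f k := (hpf (f k) k).2 rfl
        simp only [this, Equiv.symm_apply_apply]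
      right_inv := by
        intro k
        have : f ((p (f k)).symm k) = f k := by
          rw [← hpf]; simp
        simp only [this, Equiv.apply_symm_apply] }
  let b : ℕ → ℝ := fun k => a (f k) k
  have hbig : ∀ j n, u (j + 1) ≤ n → ∑ k ∈ Finset.range n, a j k • y k =
      ∑ k ∈ Finset.range (u (j + 1)), a j k • y k := by
    intro j n hn
    refine (Finset.sum_subset (Finset.range_mono hn) fun k _ hk => ?_).symm
    rw [ha0 j k, zero_smul]
    intro h
    have := (hf k j).1 h
    simp only [Finset.mem_Ico, Finset.mem_range] at this hk
    omega
  have hbound : ∀ n j, ‖∑ k ∈ Finset.range n, a j k • y k‖ ≤ M * (1 / 2 : ℝ) ^ j := by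
    intro n j
    rcases le_total n (u (j + 1)) with h | h
    · exact (hM n _ (a j) h).trans (by gcongr; exact ha1 j)
    · rw [hbig j n h]
      exact (ha1 j).trans (le_mul_of_one_le_left (by positivity) hM1)
  have hconv : Tendsto (fun n => ∑' j, ∑ k ∈ Finset.range n, a j k • y k) atTop
      (𝓝 (∑' j, ∑ k ∈ Finset.range (u (j + 1)), a j k • y k)) := by
    refine tendsto_tsum_of_dominated_convergence
      (bound := fun j => M * (1 / 2 : ℝ) ^ j) ?_ ?_ ?_
    · exact (summable_geometric_of_lt_one (by norm_num) (by norm_num)).mul_left M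
    · intro j
      exact tendsto_const_nhds.congr' ((eventually_ge_atTop (u (j + 1))).mono
        fun n hn => (hbig j n hn).symm)
    · exact Eventually.of_forall fun n j => hbound n j
  have hhs : ∀ k, HasSum (fun j => a j k • y k) (b k • y k) := by
    intro k
    exact hasSum_single (f k) fun j hj => by rw [ha0 j k hj.symm, zero_smul]
  have hsum : ∀ n, ∑' j, ∑ k ∈ Finset.range n, a j k • y k = ∑ k ∈ Finset.range n, b k • y k :=
    fun n => (hasSum_sum fun k _ => hhs k).tsum_eq
  simp_rw [hsum] at hconv
  obtain ⟨x, hx⟩ := (heq σ b).2 ⟨_, hconv⟩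
  have hd := (hx.comp (hu.tendsto_atTop.comp (tendsto_add_atTop_nat 1))).sub
    (hx.comp hu.tendsto_atTop)
  rw [sub_self] at hd
  have hd' := hd.norm
  rw [norm_zero] at hd'
  obtain ⟨j, hj⟩ := (hd'.eventually (gt_mem_nhds (zero_lt_one))).exists
  have hle := ha2 j
  have hkey : ∑ k ∈ Finset.range (u (j + 1)), a j k • y (p j k) =
      ∑ k ∈ Finset.range (u (j + 1)), b k • (y ∘ σ) k - ∑ k ∈ Finset.range (u j), b k • (y ∘ σ) k := by
    rw [← Finset.sum_Ico_eq_sub _ (hu.monotone (Nat.le_succ j)), Finset.range_eq_Ico,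
      ← Finset.sum_subset (s₁ := Finset.Ico (u j) (u (j + 1)))]
    · refine Finset.sum_congr rfl fun k hk => ?_
      have : f k = j := (hf k j).2 hk
      subst this
      rfl
    · exact Finset.Ico_subset_Ico_left (Nat.zero_le _)
    · intro k _ hk
      rw [ha0 j k fun h => hk ((hf k j).1 h), zero_smul]
  rw [hkey] at hle
  exact absurd hj (not_lt.2 hle)

theorem exists_uncond_const {Y : Type*} [NormedAddCommGroup Y] [NormedSpace ℝ Y]
    (y : ℕ → Y) (M : ℝ) (hM1 : 1 ≤ M)
    (hM : ∀ (m n : ℕ) (a : ℕ → ℝ), m ≤ n →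
      ‖∑ k ∈ Finset.range m, a k • y k‖ ≤ M * ‖∑ k ∈ Finset.range n, a k • y k‖)
    (C : ℝ) (hC : ∀ (n : ℕ) (a : ℕ → ℝ) (g : Equiv.Perm ℕ),
      ‖∑ k ∈ Finset.range n, a k • y (g k)‖ ≤ C * ‖∑ k ∈ Finset.range n, a k • y k‖)
    (n : ℕ) (a : ℕ → ℝ) (B : Finset ℕ) (hB : B ⊆ Finset.range n) :
    ‖∑ k ∈ B, a k • y k‖ ≤ M * (1 + C) * ‖∑ k ∈ Finset.range n, a k • y k‖ := by
  classical
  have hlt : ∀ k ∈ B, k < n := fun k hk => by simpa using hB hk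
  let φ : ℕ → ℕ := fun k => if k ∈ B then k + n else if n ≤ k ∧ k - n ∈ B then k - n else k
  have hφ : Function.Involutive φ := by
    intro k
    simp only [φ]
    by_cases h1 : k ∈ B
    · have : k + n ∉ B := fun h => by have := hlt _ h; omega
      simp [h1, this]
    · by_cases h2 : n ≤ k ∧ k - n ∈ B
      · simp only [h1, if_false, h2, and_self, if_true]
        omega
      · simp [h1, h2]
  let c : ℕ → ℝ := fun k => if k ∈ B then a k else if n ≤ k ∧ k - n ∈ B then - a (k - n) else 0
  have h1 : ∑ k ∈ Finset.range n, c k • y k = ∑ k ∈ B, a k • y k := by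
    rw [← Finset.sum_subset hB]
    · exact Finset.sum_congr rfl fun k hk => by simp [c, hk]
    · intro k hk hkB
      have : ¬ n ≤ k := by simpa using hk
      simp [c, hkB, this]
  have h2 : ∑ k ∈ Finset.range (n + n), c k • y k =
      ∑ k ∈ Finset.range n, a k • y k - ∑ k ∈ Finset.range n, a k • y ((Function.Involutive.toPerm φ hφ) k) := by
    rw [Finset.sum_range_add, ← Finset.sum_add_distrib, ← Finset.sum_sub_distrib]
    refine Finset.sum_congr rfl fun k hk => ?_
    have hk' : k < n := by simpa using hk
    have h3 : n + k ∉ B := fun h => by have := hlt _ h; omega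
    have h4 : ¬ n ≤ k := by omega
    by_cases hkB : k ∈ B
    · simp [c, φ, hkB, h3, sub_eq_add_neg, add_comm]
    · simp [c, φ, hkB, h3, h4]
  have h3 := hM n (n + n) c (by omega)
  rw [h1, h2] at h3
  refine h3.trans ?_
  rw [mul_assoc]
  gcongr
  refine (norm_sub_le _ _).trans ?_
  have := hC n a (Function.Involutive.toPerm φ hφ)
  linarith

/-- All-in-one consequence: a uniform lattice/symmetric bound. -/
theorem exists_lattice_const {Y : Type*} [NormedAddCommGroup Y] [NormedSpace ℝ Y]
    [CompleteSpace Y] (y : ℕ → Y) (hnorm : ∀ n, ‖y n‖ = 1) (hsym : IsSymmetricBasicSeq y) :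
    ∃ K : ℝ, 0 < K ∧ ∀ (n : ℕ) (a : ℕ → ℝ) (g : Equiv.Perm ℕ) (f : Y →L[ℝ] ℝ), ‖f‖ ≤ 1 →
      ∑ k ∈ Finset.range n, |a k| * |f (y (g k))| ≤ K * ‖∑ k ∈ Finset.range n, a k • y k‖ := by
  classical
  obtain ⟨M, hM1, hM⟩ := exists_basis_const y hsym.1
  obtain ⟨C, hC⟩ := exists_sym_const y hnorm M hM1 hM fun σ => (hsym.2 σ).2
  have hC0 : 0 < C := by
    have := hC 1 (fun _ => 1) (Equiv.refl ℕ)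
    simp [hnorm] at this
    linarith
  refine ⟨2 * (C * (M * (1 + C))), by positivity, fun n a g f hf => ?_⟩
  set X := ‖∑ k ∈ Finset.range n, a k • y k‖
  have hsub : ∀ B ⊆ Finset.range n, |∑ k ∈ B, a k * f (y (g k))| ≤ C * (M * (1 + C)) * X := by
    intro B hB
    have e1 : ∑ k ∈ B, a k * f (y (g k)) = f (∑ k ∈ B, a k • y (g k)) := by simp
    have e2 : ∀ z : ℕ → Y, ∑ k ∈ Finset.range n, (if k ∈ B then a k else 0) • z k
        = ∑ k ∈ B, a k • z k := by
      intro z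
      rw [← Finset.sum_subset hB]
      · exact Finset.sum_congr rfl fun k hk => by simp [hk]
      · intro k _ hk; simp [hk]
    have h1 := hC n (fun k => if k ∈ B then a k else 0) g
    rw [e2 (fun k => y (g k)), e2 y] at h1
    have h2 := exists_uncond_const y M hM1 hM C hC n a B hB
    rw [e1, ← Real.norm_eq_abs]
    calc ‖f (∑ k ∈ B, a k • y (g k))‖ ≤ 1 * ‖∑ k ∈ B, a k • y (g k)‖ := f.le_of_opNorm_le hf _
      _ ≤ C * ‖∑ k ∈ B, a k • y k‖ := by rw [one_mul]; exact h1
      _ ≤ C * (M * (1 + C) * X) := by gcongr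
      _ = _ := by ring
  have hsplit := Finset.sum_filter_add_sum_filter_not (Finset.range n)
    (fun k => 0 ≤ a k * f (y (g k))) (fun k => |a k| * |f (y (g k))|)
  have hp := hsub _ (Finset.filter_subset (fun k => 0 ≤ a k * f (y (g k))) (Finset.range n))
  have hn := hsub _ (Finset.filter_subset (fun k => ¬ 0 ≤ a k * f (y (g k))) (Finset.range n))
  have ep : ∑ k ∈ (Finset.range n).filter (fun k => 0 ≤ a k * f (y (g k))), |a k| * |f (y (g k))|
      = ∑ k ∈ (Finset.range n).filter (fun k => 0 ≤ a k * f (y (g k))), a k * f (y (g k)) :=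
    Finset.sum_congr rfl fun k hk => by
      rw [← abs_mul, abs_of_nonneg (Finset.mem_filter.1 hk).2]
  have en : ∑ k ∈ (Finset.range n).filter (fun k => ¬ 0 ≤ a k * f (y (g k))),
      |a k| * |f (y (g k))|
      = - ∑ k ∈ (Finset.range n).filter (fun k => ¬ 0 ≤ a k * f (y (g k))), a k * f (y (g k)) := by
    rw [← Finset.sum_neg_distrib]
    exact Finset.sum_congr rfl fun k hk => by
      rw [← abs_mul, abs_of_neg (not_le.1 (Finset.mem_filter.1 hk).2)]
  rw [← hsplit, ep, en]
  have := (abs_le.1 hp).2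
  have := (abs_le.1 hn).1
  linarith


theorem exists_sort_perm (n : ℕ) (b : ℕ → ℝ) :
    ∃ σ : Equiv.Perm ℕ, (∀ k, σ k < n ↔ k < n) ∧ ∀ i k, i ≤ k → k < n → b (σ k) ≤ b (σ i) := by
  classical
  let τ := Tuple.sort (fun i : Fin n => - b i)
  have hτ : Monotone ((fun i : Fin n => - b i) ∘ τ) := Tuple.monotone_sort _
  let g : ℕ → ℕ := fun k => if h : k < n then (τ ⟨k, h⟩ : ℕ) else k
  have hg : ∀ k (h : k < n), g k = τ ⟨k, h⟩ := fun k h => by simp [g, h]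
  obtain ⟨π, h1, h2⟩ := exists_perm_extend 0 n (Finset.range n) g
    (by rw [Finset.range_eq_Ico])
    (by
      intro k hk
      rw [hg k (by simpa using hk)]
      simp)
    (by
      intro i hi k hk h
      have hi' : i < n := by simpa using hi
      have hk' : k < n := by simpa using hk
      rw [hg i hi', hg k hk'] at h
      have := τ.injective (Fin.ext h)
      simpa using this)
  refine ⟨π, fun k => by simpa using h2 k, fun i k hik hk => ?_⟩
  have hi : i < n := hik.trans_lt hk
  rw [h1 i (by simpa using hi), h1 k (by simpa using hk), hg i hi, hg k hk]
  have := hτ (show (⟨i, hi⟩ : Fin n) ≤ ⟨k, hk⟩ from hik)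
  simp only [Function.comp] at this
  linarith

theorem exists_small_decr {Y : Type*} [NormedAddCommGroup Y] [NormedSpace ℝ Y]
    (y : ℕ → Y) (hl1 : ¬ EquivL1UnitBasis y) (K : ℝ) (hK0 : 0 < K)
    (hK : ∀ (n : ℕ) (a : ℕ → ℝ) (g : Equiv.Perm ℕ) (f : Y →L[ℝ] ℝ), ‖f‖ ≤ 1 →
      ∑ k ∈ Finset.range n, |a k| * |f (y (g k))| ≤ K * ‖∑ k ∈ Finset.range n, a k • y k‖)
    (ε : ℝ) (hε : 0 < ε) :
    ∃ (N : ℕ) (v : ℕ → ℝ), (∀ k, 0 ≤ v k) ∧ Antitone v ∧ (∀ k, N ≤ k → v k = 0) ∧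
      ∑ k ∈ Finset.range N, v k = 1 ∧
      ∀ (n : ℕ) (g : Equiv.Perm ℕ) (f : Y →L[ℝ] ℝ), ‖f‖ ≤ 1 →
        ∑ k ∈ Finset.range n, v k * |f (y (g k))| ≤ ε := by
  classical
  unfold EquivL1UnitBasis at hl1
  push Not at hl1
  obtain ⟨N, a, ha⟩ := hl1 (ε / K) (by positivity)
  set s := ∑ k ∈ Finset.range N, |a k| with hs
  have hs0 : 0 < s := by
    have : 0 < ε / K * s := (norm_nonneg _).trans_lt ha
    exact (mul_pos_iff_of_pos_left (by positivity)).1 this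
  obtain ⟨τ, hτ1, hτ2⟩ := exists_sort_perm N fun k => |a k|
  let v : ℕ → ℝ := fun k => if k < N then |a (τ k)| / s else 0
  have hv0 : ∀ k, 0 ≤ v k := fun k => by simp only [v]; split_ifs <;> positivity
  have himg : (Finset.range N).map τ.toEmbedding = Finset.range N := by
    ext k
    simp only [Finset.mem_map_equiv, Finset.mem_range]
    rw [← hτ1]; simp
  have hre : ∀ h : ℕ → ℝ, ∑ k ∈ Finset.range N, h (τ k) = ∑ k ∈ Finset.range N, h k := by
    intro h
    conv_rhs => rw [← himg]
    simp
  have hvs : ∀ k, N ≤ k → v k = 0 := fun k hk => by simp [v, not_lt.2 hk]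
  refine ⟨N, v, hv0, ?_, hvs, ?_, ?_⟩
  · intro i k hik
    by_cases hk : k < N
    · have hi : i < N := hik.trans_lt hk
      simp only [v, hk, hi, if_true]
      have := hτ2 i k hik hk
      gcongr
    · rw [hvs k (not_lt.1 hk)]; exact hv0 i
  · have : ∑ k ∈ Finset.range N, v k = ∑ k ∈ Finset.range N, |a (τ k)| / s :=
      Finset.sum_congr rfl fun k hk => by simp [v, Finset.mem_range.1 hk]
    rw [this, hre (fun k => |a k| / s), ← Finset.sum_div, ← hs, div_self hs0.ne']
  · intro n g f hf
    calc ∑ k ∈ Finset.range n, v k * |f (y (g k))|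
        ≤ ∑ k ∈ Finset.range (n + N), v k * |f (y (g k))| :=
          Finset.sum_le_sum_of_subset_of_nonneg (Finset.range_mono (by omega))
            fun k _ _ => mul_nonneg (hv0 k) (abs_nonneg _)
      _ = ∑ k ∈ Finset.range N, v k * |f (y (g k))| := by
          refine (Finset.sum_subset (Finset.range_mono (by omega)) fun k _ hk => ?_).symm
          rw [hvs k (by simpa using hk), zero_mul]
      _ = ∑ k ∈ Finset.range N, |a (τ k)| * |f (y ((τ.symm.trans g) (τ k)))| / s := by
          refine Finset.sum_congr rfl fun k hk => ?_
          simp only [v, Finset.mem_range.1 hk, if_true, Equiv.trans_apply,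
            Equiv.symm_apply_apply]
          ring
      _ = (∑ k ∈ Finset.range N, |a k| * |f (y ((τ.symm.trans g) k))|) / s := by
          rw [hre (fun k => |a k| * |f (y ((τ.symm.trans g) k))| / s), Finset.sum_div]
      _ ≤ (K * ‖∑ k ∈ Finset.range N, a k • y k‖) / s := by
          gcongr
          exact hK N a _ f hf
      _ ≤ (K * (ε / K * s)) / s := by gcongr
      _ = ε := by field_simp

theorem exists_weight {Y : Type*} [NormedAddCommGroup Y] [NormedSpace ℝ Y]
    (y : ℕ → Y) (hnorm : ∀ n, ‖y n‖ = 1) (hl1 : ¬ EquivL1UnitBasis y) (K : ℝ) (hK0 : 0 < K)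
    (hK : ∀ (n : ℕ) (a : ℕ → ℝ) (g : Equiv.Perm ℕ) (f : Y →L[ℝ] ℝ), ‖f‖ ≤ 1 →
      ∑ k ∈ Finset.range n, |a k| * |f (y (g k))| ≤ K * ‖∑ k ∈ Finset.range n, a k • y k‖) :
    ∃ w : ℕ → ℝ, Admissible w ∧ ∃ C : ℝ, 0 < C ∧
      ∀ (n : ℕ) (g : Equiv.Perm ℕ) (f : Y →L[ℝ] ℝ), ‖f‖ ≤ 1 →
        ∑ k ∈ Finset.range n, w k * |f (y (g k))| ≤ C := by
  have hstep := fun j : ℕ => exists_small_decr y hl1 K hK0 hK ((1 / 2 : ℝ) ^ j) (by positivity)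
  choose N v hv0 hvanti hvN hvsum hvb using hstep
  have hgeo : Summable (fun j : ℕ => (1 / 2 : ℝ) ^ j) :=
    summable_geometric_of_lt_one (by norm_num) (by norm_num)
  have hvle : ∀ j k, v j k ≤ (1 / 2 : ℝ) ^ j := by
    intro j k
    obtain ⟨f, hf1, hf2⟩ := exists_dual_vector ℝ (y k) (by rw [hnorm]; norm_num)
    have h1 := hvb j (k + 1) (Equiv.refl ℕ) f hf1.le
    have h2 : v j k * |f (y k)| ≤ ∑ i ∈ Finset.range (k + 1), v j i * |f (y (Equiv.refl ℕ i))| :=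
      Finset.single_le_sum (f := fun i => v j i * |f (y (Equiv.refl ℕ i))|)
        (fun i _ => mul_nonneg (hv0 j i) (abs_nonneg _)) (Finset.self_mem_range_succ k)
    rw [hf2, hnorm] at h2
    simp only [RCLike.ofReal_real_eq_id, id, abs_one, mul_one] at h2
    exact h2.trans h1
  have hsm : ∀ k, Summable (fun j => v j k) := fun k =>
    Summable.of_nonneg_of_le (fun j => hv0 j k) (fun j => hvle j k) hgeo
  let V : ℕ → ℝ := fun k => ∑' j, v j k
  have hV0 : ∀ k, 0 ≤ V k := fun k => tsum_nonneg fun j => hv0 j k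
  have hVanti : Antitone V := fun i k hik =>
    (hsm k).tsum_le_tsum (fun j => hvanti j hik) (hsm i)
  have hVlim : Tendsto V atTop (𝓝 0) := by
    have := tendsto_tsum_of_dominated_convergence (𝓕 := atTop) (f := fun k j => v j k)
      (g := fun _ => (0 : ℝ)) hgeo
      (fun j => tendsto_const_nhds.congr' ((eventually_ge_atTop (N j)).mono
        fun k hk => (hvN j k hk).symm))
      (Eventually.of_forall fun k j => by
        rw [Real.norm_of_nonneg (hv0 j k)]; exact hvle j k)
    simpa using this
  have hVns : ¬ Summable V := by
    intro hsV
    obtain ⟨J, hJ⟩ := exists_nat_gt (∑' k, V k)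
    let n := ∑ j ∈ Finset.range J, N j
    have h1 : ∑ k ∈ Finset.range n, V k ≤ ∑' k, V k := hsV.sum_le_tsum _ fun k _ => hV0 k
    have h2 : ∑ k ∈ Finset.range n, ∑ j ∈ Finset.range J, v j k ≤ ∑ k ∈ Finset.range n, V k :=
      Finset.sum_le_sum fun k _ => (hsm k).sum_le_tsum _ fun j _ => hv0 j k
    rw [Finset.sum_comm] at h2
    have h3 : ∑ j ∈ Finset.range J, (1 : ℝ) ≤
        ∑ j ∈ Finset.range J, ∑ k ∈ Finset.range n, v j k := by
      refine Finset.sum_le_sum fun j hj => ?_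
      rw [← hvsum j]
      refine Finset.sum_le_sum_of_subset_of_nonneg (Finset.range_mono ?_) fun k _ _ => hv0 j k
      exact Finset.single_le_sum (f := N) (fun i _ => Nat.zero_le _) hj
    simp at h3
    linarith
  have hVpos : ∀ k, 0 < V k := by
    intro k
    refine lt_of_le_of_ne (hV0 k) fun h => hVns ?_
    refine summable_of_ne_finset_zero (s := Finset.range k) fun i hi => ?_
    have hki : k ≤ i := by simpa using hi
    exact le_antisymm ((hVanti hki).trans h.symm.le) (hV0 i)
  have hVb : ∀ (n : ℕ) (g : Equiv.Perm ℕ) (f : Y →L[ℝ] ℝ), ‖f‖ ≤ 1 →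
      ∑ k ∈ Finset.range n, V k * |f (y (g k))| ≤ ∑' j : ℕ, (1 / 2 : ℝ) ^ j := by
    intro n g f hf
    have hs : HasSum (fun j => ∑ k ∈ Finset.range n, v j k * |f (y (g k))|)
        (∑ k ∈ Finset.range n, V k * |f (y (g k))|) :=
      hasSum_sum fun k _ => (hsm k).hasSum.mul_right _
    exact hasSum_le (fun j => hvb j n g f hf) hs hgeo.hasSum
  refine ⟨fun k => V k / V 0, ⟨fun k => div_pos (hVpos k) (hVpos 0), fun k => ?_,
    div_self (hVpos 0).ne', ?_, ?_⟩, (∑' j : ℕ, (1 / 2 : ℝ) ^ j) / V 0, ?_, ?_⟩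
  · have := hVanti (Nat.le_succ k)
    have := hVpos 0
    dsimp only
    gcongr
  · simpa using hVlim.div_const (V 0)
  · intro h
    apply hVns
    have := h.mul_right (V 0)
    refine this.congr fun k => ?_
    have := (hVpos 0).ne'
    field_simp
  · refine div_pos ?_ (hVpos 0)
    rw [tsum_geometric_of_lt_one (by norm_num) (by norm_num)]
    norm_num
  · intro n g f hf
    have h1 := hVb n g f hf
    have : ∑ k ∈ Finset.range n, V k / V 0 * |f (y (g k))| =
        (∑ k ∈ Finset.range n, V k * |f (y (g k))|) / V 0 := by
      rw [Finset.sum_div]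
      exact Finset.sum_congr rfl fun k _ => by ring
    rw [this]
    have := hVpos 0
    gcongr


theorem abel_nonneg (d b : ℕ → ℝ) (n : ℕ) (hb0 : ∀ k, 0 ≤ b k)
    (hb : ∀ i k, i ≤ k → k < n → b k ≤ b i)
    (hd : ∀ m, m ≤ n → 0 ≤ ∑ k ∈ Finset.range m, d k) :
    0 ≤ ∑ k ∈ Finset.range n, d k * b k := by
  have key : ∀ m, m < n → b m * ∑ k ∈ Finset.range (m + 1), d k ≤
      ∑ k ∈ Finset.range (m + 1), d k * b k := by
    intro m
    induction m with
    | zero => intro _; simp [mul_comm]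
    | succ m ih =>
      intro hm
      have h1 := ih (by omega)
      have h2 := hb m (m + 1) (by omega) hm
      have h3 := hd (m + 1) hm.le
      rw [Finset.sum_range_succ _ (m + 1), Finset.sum_range_succ _ (m + 1)]
      nlinarith [mul_le_mul_of_nonneg_right h2 h3]
  rcases n with _ | n
  · simp
  · exact (mul_nonneg (hb0 n) (hd (n + 1) le_rfl)).trans (key n (Nat.lt_succ_self n))

theorem norm_sum_le_of_dStar {Y : Type*} [NormedAddCommGroup Y] [NormedSpace ℝ Y]
    (y : ℕ → Y) (w : ℕ → ℝ) (C : ℝ)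
    (hC : ∀ (n : ℕ) (g : Equiv.Perm ℕ) (f : Y →L[ℝ] ℝ), ‖f‖ ≤ 1 →
        ∑ k ∈ Finset.range n, w k * |f (y (g k))| ≤ C)
    (x : ℕ → ℝ) (R : ℝ) (hR : 0 ≤ R)
    (hx : ∀ A : Finset ℕ, ∑ k ∈ A, |x k| ≤ R * ∑ k ∈ Finset.range A.card, w k) (n : ℕ) :
    ‖∑ k ∈ Finset.range n, x k • y k‖ ≤ C * R := by
  obtain ⟨f, hf1, hf2⟩ := exists_dual_vector'' ℝ (∑ k ∈ Finset.range n, x k • y k)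
  obtain ⟨σ, hσ1, hσ2⟩ := exists_sort_perm n fun k => |f (y k)|
  have himg : (Finset.range n).map σ.toEmbedding = Finset.range n := by
    ext k
    simp only [Finset.mem_map_equiv, Finset.mem_range]
    rw [← hσ1]; simp
  have h0 : ‖∑ k ∈ Finset.range n, x k • y k‖ = f (∑ k ∈ Finset.range n, x k • y k) := by
    rw [hf2]; simp
  have h1 : f (∑ k ∈ Finset.range n, x k • y k) ≤
      ∑ k ∈ Finset.range n, |x (σ k)| * |f (y (σ k))| := by
    have : ∑ k ∈ Finset.range n, |x (σ k)| * |f (y (σ k))| =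
        ∑ k ∈ Finset.range n, |x k| * |f (y k)| := by
      conv_rhs => rw [← himg]
      simp
    rw [this, map_sum]
    refine Finset.sum_le_sum fun k _ => ?_
    rw [map_smul, smul_eq_mul, ← abs_mul]
    exact le_abs_self _
  have h2 := abel_nonneg (fun k => R * w k - |x (σ k)|) (fun k => |f (y (σ k))|) n
    (fun k => abs_nonneg _) hσ2 (by
      intro m _
      have := hx ((Finset.range m).map σ.toEmbedding)
      simp only [Finset.sum_map, Finset.card_map, Finset.card_range,
        Equiv.coe_toEmbedding] at this
      rw [Finset.sum_sub_distrib, ← Finset.mul_sum]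
      linarith)
  simp only [sub_mul, Finset.sum_sub_distrib, mul_assoc, ← Finset.mul_sum] at h2
  have h3 := mul_le_mul_of_nonneg_left (hC n σ f hf1) hR
  rw [h0]
  linarith

theorem sum_le_rearrSum (x : ℕ → ℝ) (hx : Tendsto x atTop (𝓝 0)) (A : Finset ℕ) :
    ∑ k ∈ A, |x k| ≤ rearrSum x A.card := by
  obtain ⟨B, hB⟩ := Metric.isBounded_iff_subset_closedBall (0 : ℝ) |>.1
      (Metric.isBounded_range_of_tendsto _ hx)
  have hB' : ∀ k, |x k| ≤ B := fun k => by simpa using hB ⟨k, rfl⟩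
  refine le_csSup ⟨A.card * B, ?_⟩ ⟨A, rfl, rfl⟩
  rintro _ ⟨A', hA', rfl⟩
  have hA'' : A'.card = A.card := hA'
  calc ∑ k ∈ A', |x k| ≤ ∑ k ∈ A', B := Finset.sum_le_sum fun k _ => hB' k
    _ = _ := by simp [hA'']

theorem dStar_sum_le (w : ℕ → ℝ) (hw : Admissible w) (x : ℕ → ℝ) (hx : x ∈ dStarSet w)
    (A : Finset ℕ) :
    ∑ k ∈ A, |x k| ≤ dStarNorm w x * ∑ k ∈ Finset.range A.card, w k := by
  rcases A.eq_empty_or_nonempty with rfl | hA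
  · simp
  have hpos : 0 < ∑ k ∈ Finset.range A.card, w k :=
    Finset.sum_pos (fun k _ => hw.1 k) (by simpa using hA.card_pos.ne')
  rw [← div_le_iff₀ hpos]
  have h1 := sum_le_rearrSum x hx.1 A
  have hbdd : BddAbove (Set.range fun n => rearrSum x n / ∑ k ∈ Finset.range n, w k) :=
    hx.2.bddAbove_range
  refine le_trans ?_ (le_ciSup hbdd A.card)
  gcongr

theorem dStar_tail (w : ℕ → ℝ) (hw : Admissible w) (x : ℕ → ℝ) (hx : x ∈ dStarSet w)
    (ε : ℝ) (hε : 0 < ε) :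
    ∃ m : ℕ, ∀ A : Finset ℕ, ∑ k ∈ A, |(if m ≤ k then x k else 0)| ≤
      ε * ∑ k ∈ Finset.range A.card, w k := by
  obtain ⟨N, hN⟩ := (hx.2.eventually (gt_mem_nhds hε)).exists_forall_of_atTop
  obtain ⟨m, hm⟩ := ((by simpa using hx.1.abs : Tendsto (fun k => |x k|) atTop (𝓝 0)).eventually
    (gt_mem_nhds (show 0 < ε / (N + 1) by positivity))).exists_forall_of_atTop
  refine ⟨m, fun A => ?_⟩
  rcases A.eq_empty_or_nonempty with rfl | hA
  · simp
  have hpos : 0 < ∑ k ∈ Finset.range A.card, w k :=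
    Finset.sum_pos (fun k _ => hw.1 k) (by simpa using hA.card_pos.ne')
  by_cases h : N ≤ A.card
  · have h1 := hN _ h
    rw [div_lt_iff₀ hpos] at h1
    refine le_trans ?_ h1.le
    refine le_trans (Finset.sum_le_sum fun k _ => ?_) (sum_le_rearrSum x hx.1 A)
    split_ifs <;> simp
  · have hc : (A.card : ℝ) ≤ N + 1 := by
      have : A.card ≤ N + 1 := by omega
      exact_mod_cast this
    have h1 : 1 ≤ ∑ k ∈ Finset.range A.card, w k := by
      rw [← hw.2.2.1]
      exact Finset.single_le_sum (f := w) (fun i _ => (hw.1 i).le)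
        (Finset.mem_range.2 hA.card_pos)
    calc ∑ k ∈ A, |(if m ≤ k then x k else 0)| ≤ ∑ k ∈ A, ε / (N + 1) := by
          refine Finset.sum_le_sum fun k _ => ?_
          split_ifs with hk
          · exact (hm k hk).le
          · rw [abs_zero]; positivity
      _ = A.card * (ε / (N + 1)) := by simp
      _ ≤ (N + 1) * (ε / (N + 1)) := by gcongr
      _ = ε * 1 := by field_simp
      _ ≤ _ := by gcongr

theorem dStar_cauchy {Y : Type*} [NormedAddCommGroup Y] [NormedSpace ℝ Y]
    (y : ℕ → Y) (w : ℕ → ℝ) (hw : Admissible w) (C : ℝ) (hC0 : 0 < C)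
    (hC : ∀ (n : ℕ) (g : Equiv.Perm ℕ) (f : Y →L[ℝ] ℝ), ‖f‖ ≤ 1 →
        ∑ k ∈ Finset.range n, w k * |f (y (g k))| ≤ C)
    (x : ℕ → ℝ) (hx : x ∈ dStarSet w) :
    CauchySeq (fun n => ∑ k ∈ Finset.range n, x k • y k) := by
  rw [Metric.cauchySeq_iff']
  intro ε hε
  obtain ⟨m, hm⟩ := dStar_tail w hw x hx (ε / (2 * C)) (by positivity)
  refine ⟨m, fun n hn => ?_⟩
  have h1 := norm_sum_le_of_dStar y w C hC (fun k => if m ≤ k then x k else 0) _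
    (by positivity) hm n
  have h2 : ∑ k ∈ Finset.range n, (if m ≤ k then x k else 0) • y k =
      ∑ k ∈ Finset.range n, x k • y k - ∑ k ∈ Finset.range m, x k • y k := by
    rw [← Finset.sum_Ico_eq_sub _ hn, Finset.range_eq_Ico,
      ← Finset.sum_subset (s₁ := Finset.Ico m n)]
    · exact Finset.sum_congr rfl fun k hk => by simp [(Finset.mem_Ico.1 hk).1]
    · exact Finset.Ico_subset_Ico_left (Nat.zero_le _)
    · intro k hk hk'
      simp only [Finset.mem_Ico] at hk hk'
      have : ¬ m ≤ k := by omega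
      simp [this]
  rw [dist_eq_norm, ← h2]
  refine h1.trans_lt ?_
  have : C * (ε / (2 * C)) = ε / 2 := by field_simp
  rw [this]; linarith

/-- if `Y` contains a normalized symmetric basic sequence `(y n)` not
equivalent to the unit vector basis of `ℓ₁`, then there are an admissible sequence `w`
and a bounded linear operator `T : d_*(w) → Y` with `T e_n = y_n` for all `n`, where
`(e_n)` is the unit vector basis of `d_*(w)` (here `d_*(w)` is represented by any Banach
space `D` isometrically identified with it via `j`). -/
theorem exists_dStar_operator_of_symmetric_basic (Y : Type*) [NormedAddCommGroup Y]
    [NormedSpace ℝ Y] [CompleteSpace Y]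
    (y : ℕ → Y) (hnorm : ∀ n, ‖y n‖ = 1) (hsym : IsSymmetricBasicSeq y)
    (hl1 : ¬ EquivL1UnitBasis y) :
    ∃ w : ℕ → ℝ, Admissible w ∧
      ∀ (D : Type) (_ : NormedAddCommGroup D), ∀ (_ : NormedSpace ℝ D)
        (_ : CompleteSpace D) (j : D →ₗ[ℝ] (ℕ → ℝ)), IsDStarRep w D j →
          ∃ T : D →L[ℝ] Y, ∀ (n : ℕ) (x : D),
            j x = (Pi.single n 1 : ℕ → ℝ) → T x = y n := by
  obtain ⟨K, hK0, hK⟩ := exists_lattice_const y hnorm hsym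
  obtain ⟨w, hw, C, hC0, hC⟩ := exists_weight y hnorm hl1 K hK0 hK
  refine ⟨w, hw, ?_⟩
  rintro D _ _ _ j ⟨-, hran, hn⟩
  have hmem : ∀ z, j z ∈ dStarSet w := fun z => by rw [← hran]; exact ⟨z, rfl⟩
  choose S hS using fun z => cauchySeq_tendsto_of_complete
    (dStar_cauchy y w hw C hC0 hC (j z) (hmem z))
  let T₀ : D →ₗ[ℝ] Y :=
    { toFun := S
      map_add' := by
        intro z z'
        refine tendsto_nhds_unique (hS (z + z')) ?_
        refine ((hS z).add (hS z')).congr fun n => ?_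
        simp [add_smul, Finset.sum_add_distrib]
      map_smul' := by
        intro c z
        refine tendsto_nhds_unique (hS (c • z)) ?_
        refine ((hS z).const_smul c).congr fun n => ?_
        simp [mul_smul, Finset.smul_sum] }
  refine ⟨T₀.mkContinuous C fun z => ?_, fun n x hx => ?_⟩
  · refine le_of_tendsto (hS z).norm (Eventually.of_forall fun n => ?_)
    refine norm_sum_le_of_dStar y w C hC (j z) ‖z‖ (norm_nonneg _) (fun A => ?_) n
    rw [hn]
    exact dStar_sum_le w hw (j z) (hmem z) A
  · refine tendsto_nhds_unique (hS x) ?_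
    refine tendsto_const_nhds.congr' ((eventually_gt_atTop n).mono fun i hi => ?_)
    rw [hx]
    dsimp only
    rw [Finset.sum_eq_single n]
    · simp
    · intro k _ hk; simp [Pi.single_eq_of_ne hk]
    · intro h; exact absurd (Finset.mem_range.2 hi) h
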